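/- arXiv:1111.2440 — 2 statements merged into one kernel-verified Lean document; each statement's English description precedes it below -/
import Mathlib

section
/- Let (Ω, μ) be a measure space such that there exists an integrable function b : Ω → ℂ that is not essentially bounded (i.e. L¹(Ω,μ) ⊄ L^∞(Ω,μ)), and let H be a nontrivial complex Hilbert space. If there exists a continuous frame F : Ω → H with respect to (Ω, μ), then there exists a continuous frame F' : Ω → H that is not essentially norm bounded, i.e., for every M > 0 the set {ω ∈ Ω : ‖F'(ω)‖ > M} has positive μ-measure. -/
open MeasureTheory

local notation "⟪" x ", " y "⟫" => @inner ℂ _ _ x y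

/-- If `(Ω, μ)` admits an integrable function `b` that is not essentially bounded
(i.e. `L¹(Ω,μ) ⊄ L^∞(Ω,μ)`), `H` is a nontrivial complex Hilbert space, and there exists a
continuous frame `F : Ω → H` with respect to `(Ω, μ)`, then there exists a continuous frame
`F' : Ω → H` that is not essentially norm bounded: for every `M > 0` the set
`{ω : ‖F'(ω)‖ > M}` has positive measure. -/
theorem exists_norm_unbounded_continuous_frame
    {Ω : Type} [MeasurableSpace Ω] (μ : Measure Ω)
    {H : Type} [NormedAddCommGroup H] [InnerProductSpace ℂ H] [CompleteSpace H]
    [Nontrivial H]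
    (b : Ω → ℂ) (hb_int : Integrable b μ)
    (hb_unbdd : ∀ C : ℝ, 0 < μ {ω | C < ‖b ω‖})
    (F : Ω → H)
    (hF_meas : ∀ f : H, Measurable fun ω => ⟪F ω, f⟫)
    (A B : ℝ) (hA : 0 < A)
    (hF_lower : ∀ f : H,
      ENNReal.ofReal (A * ‖f‖ ^ 2) ≤ ∫⁻ ω, (‖⟪F ω, f⟫‖₊ : ENNReal) ^ 2 ∂μ)
    (hF_upper : ∀ f : H,
      ∫⁻ ω, (‖⟪F ω, f⟫‖₊ : ENNReal) ^ 2 ∂μ ≤ ENNReal.ofReal (B * ‖f‖ ^ 2)) :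
    ∃ F' : Ω → H,
      (∀ f : H, Measurable fun ω => ⟪F' ω, f⟫) ∧
      (∃ A' B' : ℝ, 0 < A' ∧
        (∀ f : H,
          ENNReal.ofReal (A' * ‖f‖ ^ 2) ≤ ∫⁻ ω, (‖⟪F' ω, f⟫‖₊ : ENNReal) ^ 2 ∂μ) ∧
        (∀ f : H,
          ∫⁻ ω, (‖⟪F' ω, f⟫‖₊ : ENNReal) ^ 2 ∂μ ≤ ENNReal.ofReal (B' * ‖f‖ ^ 2))) ∧
      (∀ M : ℝ, 0 < M → 0 < μ {ω | M < ‖F' ω‖}) := by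
  classical
  by_cases hub : ∀ M : ℝ, 0 < M → 0 < μ {ω | M < ‖F ω‖}
  · exact ⟨F, hF_meas, ⟨A, B, hA, hF_lower, hF_upper⟩, hub⟩
  push Not at hub
  obtain ⟨M₀, hM₀, hM₀'⟩ := hub
  have hz : μ {ω | M₀ < ‖F ω‖} = 0 := nonpos_iff_eq_zero.1 hM₀'
  obtain ⟨v, hv⟩ := exists_ne (0 : H)
  obtain ⟨e, he⟩ : ∃ e : H, ‖e‖ = 1 := ⟨_, norm_smul_inv_norm (𝕜 := ℂ) hv⟩
  have hbs := hb_int.1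
  obtain ⟨β, hβm, hβ⟩ : ∃ β : Ω → ℂ, Measurable β ∧ b =ᵐ[μ] β :=
    ⟨hbs.mk b, hbs.stronglyMeasurable_mk.measurable, hbs.ae_eq_mk⟩
  have hβi : Integrable β μ := hb_int.congr hβ
  set N : ℝ := ∫ ω, ‖β ω‖ ∂μ with hN
  have hN0 : 0 ≤ N := integral_nonneg fun _ => norm_nonneg _
  set K : ℝ := A / (4 * (N + 1)) with hK
  have hK0 : 0 < K := by positivity
  have hKN : K * N ≤ A / 4 := by
    rw [hK, div_mul_eq_mul_div, div_le_div_iff₀ (by positivity) (by positivity)]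
    nlinarith
  set g : Ω → ℝ := fun ω => Real.sqrt (K * ‖β ω‖) with hg
  have hgm : Measurable g := by fun_prop
  have hin : ∀ (f : H) ω, ⟪F ω + (g ω : ℂ) • e, f⟫ = ⟪F ω, f⟫ + (g ω : ℂ) * ⟪e, f⟫ := by
    intro f ω
    rw [inner_add_left, inner_smul_left, Complex.conj_ofReal]
  have hsq : ∀ z : ℂ, (‖z‖₊ : ENNReal) ^ 2 = ENNReal.ofReal (‖z‖ ^ 2) := by
    intro z
    rw [ENNReal.ofReal_pow (norm_nonneg _), ofReal_norm]
    rfl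
  have hpert : ∀ f : H, ∫⁻ ω, (‖(g ω : ℂ) * ⟪e, f⟫‖₊ : ENNReal) ^ 2 ∂μ
      ≤ ENNReal.ofReal (A / 4 * ‖f‖ ^ 2) := by
    intro f
    calc ∫⁻ ω, (‖(g ω : ℂ) * ⟪e, f⟫‖₊ : ENNReal) ^ 2 ∂μ
        ≤ ∫⁻ ω, ENNReal.ofReal (K * ‖f‖ ^ 2 * ‖β ω‖) ∂μ := by
          refine lintegral_mono fun ω => ?_
          rw [hsq]
          refine ENNReal.ofReal_le_ofReal ?_
          have h1 : ‖⟪e, f⟫‖ ≤ ‖f‖ := by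
            simpa [he] using norm_inner_le_norm (𝕜 := ℂ) e f
          have h2 : g ω ^ 2 = K * ‖β ω‖ := Real.sq_sqrt (by positivity)
          rw [norm_mul, mul_pow, Complex.norm_real, Real.norm_eq_abs, sq_abs, h2]
          have h3 : ‖⟪e, f⟫‖ ^ 2 ≤ ‖f‖ ^ 2 := by gcongr
          calc K * ‖β ω‖ * ‖⟪e, f⟫‖ ^ 2 ≤ K * ‖β ω‖ * ‖f‖ ^ 2 := by gcongr
            _ = _ := by ring
      _ = ENNReal.ofReal (∫ ω, K * ‖f‖ ^ 2 * ‖β ω‖ ∂μ) := by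
          rw [ofReal_integral_eq_lintegral_ofReal (hβi.norm.const_mul _)]
          exact Filter.Eventually.of_forall fun ω => by positivity
      _ ≤ _ := by
          rw [integral_const_mul]
          refine ENNReal.ofReal_le_ofReal ?_
          calc K * ‖f‖ ^ 2 * N = (K * N) * ‖f‖ ^ 2 := by ring
            _ ≤ _ := by gcongr
  have htri : ∀ x y : ℂ, (‖x + y‖₊ : ENNReal) ^ 2
      ≤ 2 * (‖x‖₊ : ENNReal) ^ 2 + 2 * (‖y‖₊ : ENNReal) ^ 2 := by
    intro x y
    rw [hsq, hsq, hsq, show (2 : ENNReal) = ENNReal.ofReal 2 by simp,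
      ← ENNReal.ofReal_mul (by norm_num), ← ENNReal.ofReal_mul (by norm_num),
      ← ENNReal.ofReal_add (by positivity) (by positivity)]
    refine ENNReal.ofReal_le_ofReal ?_
    have h1 := norm_add_le x y
    have h2 : ‖x + y‖ ^ 2 ≤ (‖x‖ + ‖y‖) ^ 2 := by gcongr
    nlinarith [sq_nonneg (‖x‖ - ‖y‖)]
  have hint : ∀ u w : Ω → ℂ, Measurable u → Measurable w →
      ∫⁻ ω, (‖u ω + w ω‖₊ : ENNReal) ^ 2 ∂μ
      ≤ 2 * ∫⁻ ω, (‖u ω‖₊ : ENNReal) ^ 2 ∂μ + 2 * ∫⁻ ω, (‖w ω‖₊ : ENNReal) ^ 2 ∂μ := by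
    intro u w hu hw
    rw [← lintegral_const_mul _ (by fun_prop), ← lintegral_const_mul _ (by fun_prop),
      ← lintegral_add_left (by fun_prop)]
    exact lintegral_mono fun ω => htri _ _
  have hwm : ∀ f : H, Measurable fun ω => (g ω : ℂ) * ⟪e, f⟫ := by
    intro f; fun_prop
  have hFm' : ∀ f : H, Measurable fun ω => ⟪F ω + (g ω : ℂ) • e, f⟫ := by
    intro f
    simp only [hin]
    exact (hF_meas f).add (hwm f)
  have h2e : (2 : ENNReal) = ENNReal.ofReal 2 := by simp
  refine ⟨fun ω => F ω + (g ω : ℂ) • e, hFm', ⟨A / 4, 2 * |B| + A / 2, by positivity, ?_, ?_⟩, ?_⟩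
  · intro f
    have h1 := hint (fun ω => ⟪F ω + (g ω : ℂ) • e, f⟫) (fun ω => -((g ω : ℂ) * ⟪e, f⟫))
      (hFm' f) (hwm f).neg
    simp only [nnnorm_neg] at h1
    have h2 : ∀ ω, ⟪F ω + (g ω : ℂ) • e, f⟫ + -((g ω : ℂ) * ⟪e, f⟫) = ⟪F ω, f⟫ := by
      intro ω; rw [hin]; ring
    simp only [h2] at h1
    have h3 := (hF_lower f).trans (h1.trans (add_le_add_right (mul_le_mul_right (hpert f) 2) _))
    have h4 : ENNReal.ofReal (A * ‖f‖ ^ 2) = 2 * ENNReal.ofReal (A / 4 * ‖f‖ ^ 2)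
        + 2 * ENNReal.ofReal (A / 4 * ‖f‖ ^ 2) := by
      rw [h2e, ← ENNReal.ofReal_mul (by norm_num),
        ← ENNReal.ofReal_add (by positivity) (by positivity)]
      congr 1; ring
    rw [h4] at h3
    have h5 := (ENNReal.add_le_add_iff_right
      (ENNReal.mul_ne_top ENNReal.ofNat_ne_top ENNReal.ofReal_ne_top)).1 h3
    exact (ENNReal.mul_le_mul_iff_right two_ne_zero ENNReal.ofNat_ne_top).1 h5
  · intro f
    have h1 := hint _ _ (hF_meas f) (hwm f)
    simp only [hin]
    refine h1.trans ?_
    have hB : ENNReal.ofReal (B * ‖f‖ ^ 2) ≤ ENNReal.ofReal (|B| * ‖f‖ ^ 2) := by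
      refine ENNReal.ofReal_le_ofReal ?_
      gcongr
      exact le_abs_self B
    calc _ ≤ 2 * ENNReal.ofReal (|B| * ‖f‖ ^ 2) + 2 * ENNReal.ofReal (A / 4 * ‖f‖ ^ 2) :=
          add_le_add (mul_le_mul_right ((hF_upper f).trans hB) 2)
            (mul_le_mul_right (hpert f) 2)
      _ = _ := by
          rw [h2e, ← ENNReal.ofReal_mul (by norm_num), ← ENNReal.ofReal_mul (by norm_num),
            ← ENNReal.ofReal_add (by positivity) (by positivity)]
          congr 1; ring
  · intro M hM
    refine (hb_unbdd ((M + M₀) ^ 2 / K)).trans_le ?_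
    refine measure_mono_ae ?_
    have hz' : ∀ᵐ ω ∂μ, ¬ (M₀ < ‖F ω‖) := by
      rw [ae_iff]; simpa using hz
    filter_upwards [hβ, hz'] with ω h1 h2 h3
    change (M + M₀) ^ 2 / K < ‖b ω‖ at h3
    change M < ‖F ω + (g ω : ℂ) • e‖
    rw [h1, div_lt_iff₀ hK0] at h3
    have h4 : M + M₀ < g ω := Real.lt_sqrt_of_sq_lt (by rw [mul_comm K]; exact h3)
    have h5 : ‖(g ω : ℂ) • e‖ = g ω := by
      rw [norm_smul, he, mul_one, Complex.norm_real, Real.norm_eq_abs,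
        abs_of_nonneg (Real.sqrt_nonneg _)]
    have h6 := norm_sub_le (F ω + (g ω : ℂ) • e) (F ω)
    rw [add_sub_cancel_left, h5] at h6
    linarith [not_lt.1 h2]
end

section
/- Let F and G be Bessel mappings for H with respect to (Ω, μ) and suppose that F is norm bounded by some L > 0 or G is norm bounded by some L > 0. Let m : Ω → ℂ be measurable, essentially bounded, and with support of finite measure, i.e., there exists a measurable K ⊆ Ω with μ(K) < ∞ such that m(ω) = 0 for μ-almost every ω ∈ Ω \ K. If M : H → H is a bounded operator satisfying ⟨M f, g⟩ = ∫_Ω m(ω)⟨f, F(ω)⟩⟨G(ω), g⟩ dμ(ω) for all f, g ∈ H, then M is a compact operator. -/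
open MeasureTheory

local notation "⟪" x ", " y "⟫" => @inner ℂ _ _ x y

theorem aux_approx {H : Type} [NormedAddCommGroup H] [InnerProductSpace ℂ H]
    (T : H →L[ℂ] H) (S : ℝ)
    (hS : ∀ s : Finset H, Orthonormal ℂ (Subtype.val : s → H) → ∑ e ∈ s, ‖T e‖ ^ 2 ≤ S)
    (ε : ℝ) (hε : 0 < ε) :
    ∃ s : Finset H, ∀ f ∈ (Submodule.span ℂ (s : Set H))ᗮ, ‖T f‖ ≤ ε * ‖f‖ := by
  classical
  set A : Set ℝ := {x | ∃ s : Finset H, Orthonormal ℂ (Subtype.val : s → H) ∧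
    ∑ e ∈ s, ‖T e‖ ^ 2 = x} with hA
  have hbdd : BddAbove A := ⟨S, by rintro x ⟨s, hs, rfl⟩; exact hS s hs⟩
  have hne : A.Nonempty := by
    refine ⟨0, ∅, ?_, by simp⟩
    exact ⟨fun i => absurd i.2 (Finset.notMem_empty _), fun i => absurd i.2 (Finset.notMem_empty _)⟩
  obtain ⟨x, ⟨s, hs, rfl⟩, hx⟩ := exists_lt_of_lt_csSup hne
    (show sSup A - ε ^ 2 < sSup A by have := pow_pos hε 2; linarith)
  refine ⟨s, fun f hf => ?_⟩
  rcases eq_or_ne f 0 with rfl | hf0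
  · simp
  have hnf : 0 < ‖f‖ := norm_pos_iff.2 hf0
  set u : H := ((‖f‖⁻¹ : ℝ) : ℂ) • f with hu
  have hu1 : ‖u‖ = 1 := by
    rw [hu, norm_smul, Complex.norm_real, norm_inv, norm_norm, inv_mul_cancel₀ hnf.ne']
  have huV : u ∈ (Submodule.span ℂ (s : Set H))ᗮ := Submodule.smul_mem _ _ hf
  have hin : ∀ e ∈ s, ⟪e, u⟫ = 0 := fun e he =>
    (Submodule.mem_orthogonal _ _).1 huV e (Submodule.subset_span he)
  have hus : u ∉ s := by
    intro h
    have := hin u h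
    rw [inner_self_eq_zero] at this
    rw [this] at hu1
    simp at hu1
  have hort : Orthonormal ℂ (Subtype.val : {x // x ∈ insert u s} → H) := by
    refine ⟨?_, ?_⟩
    · rintro ⟨e, he⟩
      rcases Finset.mem_insert.1 he with rfl | he
      · exact hu1
      · exact hs.1 ⟨e, he⟩
    · rintro ⟨e, he⟩ ⟨e', he'⟩ hne'
      have hne2 : e ≠ e' := fun h => hne' (Subtype.ext h)
      show ⟪e, e'⟫ = 0
      rcases Finset.mem_insert.1 he with h1 | h1 <;> rcases Finset.mem_insert.1 he' with h2 | h2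
      · exact absurd (h1.trans h2.symm) hne2
      · rw [h1]; exact inner_eq_zero_symm.1 (hin e' h2)
      · rw [h2]; exact hin e h1
      · exact hs.2 (i := ⟨e, h1⟩) (j := ⟨e', h2⟩) (fun h => hne2 (congrArg Subtype.val h))
  have hle := le_csSup hbdd (show _ ∈ A from ⟨insert u s, hort, rfl⟩)
  rw [Finset.sum_insert hus] at hle
  have h2 : ‖T u‖ ≤ ε := by
    refine abs_le_of_sq_le_sq' ?_ hε.le |>.2
    linarith
  rw [hu, map_smul, norm_smul, Complex.norm_real, norm_inv, norm_norm] at h2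
  rwa [inv_mul_le_iff₀ hnf, mul_comm] at h2

theorem aux_compact {H : Type} [NormedAddCommGroup H] [InnerProductSpace ℂ H] [CompleteSpace H]
    (T : H →L[ℂ] H)
    (h : ∀ ε : ℝ, 0 < ε →
      ∃ s : Finset H, ∀ f ∈ (Submodule.span ℂ (s : Set H))ᗮ, ‖T f‖ ≤ ε * ‖f‖) :
    IsCompactOperator T ∧ IsCompactOperator (ContinuousLinearMap.adjoint T) := by
  have key : ∀ ε : ℝ, 0 < ε → ∃ P : H →L[ℂ] H, IsCompactOperator P ∧ IsSelfAdjoint P ∧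
      ‖T - T ∘L P‖ ≤ ε := by
    intro ε hε
    obtain ⟨s, hs⟩ := h ε hε
    set V := Submodule.span ℂ (s : Set H) with hV
    have : FiniteDimensional ℂ V := FiniteDimensional.span_finset ℂ s
    refine ⟨V.starProjection, ?_, isSelfAdjoint_starProjection V, ?_⟩
    · have h1 : IsCompactOperator V.subtypeL := by
        have h0 : ProperSpace V := FiniteDimensional.proper ℂ V
        have h00 : IsCompactOperator (id : V → V) :=
          isCompactOperator_id_iff_locallyCompactSpace.2 inferInstance
        exact h00.clm_comp V.subtypeL
      exact h1.comp_clm V.orthogonalProjectionOnto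
    · refine ContinuousLinearMap.opNorm_le_bound _ hε.le fun f => ?_
      have h1 := hs (f - V.starProjection f) (V.sub_starProjection_mem_orthogonal f)
      have h2 : ‖f - V.starProjection f‖ ≤ ‖f‖ := by
        have h4 : Vᗮ.starProjection f = f - V.starProjection f := by
          rw [Submodule.starProjection_orthogonal]; simp
        rw [← h4]
        exact (Vᗮ.starProjection.le_opNorm f).trans
          (mul_le_of_le_one_left (norm_nonneg f) Vᗮ.starProjection_norm_le)
      have h3 : (T - T ∘L V.starProjection) f = T (f - V.starProjection f) := by simp
      rw [h3]
      exact h1.trans (by gcongr)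
  constructor
  · have : T ∈ closure {f : H →L[ℂ] H | IsCompactOperator f} := by
      rw [Metric.mem_closure_iff]
      intro ε hε
      obtain ⟨P, hP, -, hT⟩ := key (ε / 2) (by positivity)
      refine ⟨T ∘L P, hP.clm_comp T, ?_⟩
      rw [dist_eq_norm]; linarith
    rwa [isClosed_setOf_isCompactOperator.closure_eq] at this
  · have : ContinuousLinearMap.adjoint T ∈ closure {f : H →L[ℂ] H | IsCompactOperator f} := by
      rw [Metric.mem_closure_iff]
      intro ε hε
      obtain ⟨P, hP, hPs, hT⟩ := key (ε / 2) (by positivity)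
      refine ⟨P ∘L ContinuousLinearMap.adjoint T, hP.comp_clm _, ?_⟩
      have : ContinuousLinearMap.adjoint T - P ∘L ContinuousLinearMap.adjoint T =
          ContinuousLinearMap.adjoint (T - T ∘L P) := by
        rw [map_sub, ContinuousLinearMap.adjoint_comp, hPs.adjoint_eq]
      rw [dist_eq_norm, this, LinearIsometryEquiv.norm_map]; linarith
    rwa [isClosed_setOf_isCompactOperator.closure_eq] at this

theorem aux_bessel {Ω : Type} [MeasurableSpace Ω] (μ : Measure Ω)
    {H : Type} [NormedAddCommGroup H] [InnerProductSpace ℂ H]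
    (F : Ω → H) (B : ℝ) (hB : 0 < B) (hF_meas : ∀ f : H, Measurable fun ω => ⟪F ω, f⟫)
    (hF_bessel : ∀ f : H,
      ∫⁻ ω, (‖⟪F ω, f⟫‖₊ : ENNReal) ^ 2 ∂μ ≤ ENNReal.ofReal (B * ‖f‖ ^ 2)) (f : H) :
    Integrable (fun ω => ‖⟪F ω, f⟫‖ ^ 2) μ ∧ ∫ ω, ‖⟪F ω, f⟫‖ ^ 2 ∂μ ≤ B * ‖f‖ ^ 2 := by
  have hm : Measurable (fun ω => ‖⟪F ω, f⟫‖ ^ 2) := (hF_meas f).norm.pow_const 2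
  have he : ∀ ω, ENNReal.ofReal (‖⟪F ω, f⟫‖ ^ 2) = (‖⟪F ω, f⟫‖₊ : ENNReal) ^ 2 := fun ω => by
    rw [ENNReal.ofReal_pow (norm_nonneg _), ofReal_norm_eq_enorm]; rfl
  constructor
  · refine ⟨hm.aestronglyMeasurable, ?_⟩
    rw [hasFiniteIntegral_iff_ofReal (Filter.Eventually.of_forall fun ω => by positivity)]
    simp_rw [he]
    exact (hF_bessel f).trans_lt ENNReal.ofReal_lt_top
  · rw [integral_eq_lintegral_of_nonneg_ae (Filter.Eventually.of_forall fun ω => by positivity)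
      hm.aestronglyMeasurable]
    simp_rw [he]
    exact ENNReal.toReal_le_of_le_ofReal (by positivity) (hF_bessel f)

theorem aux_core {Ω : Type} [MeasurableSpace Ω] (μ : Measure Ω)
    {H : Type} [NormedAddCommGroup H] [InnerProductSpace ℂ H] [CompleteSpace H]
    (F G : Ω → H) (B_F B_G : ℝ) (hBF : 0 < B_F) (hBG : 0 < B_G)
    (hF_meas : ∀ f : H, Measurable fun ω => ⟪F ω, f⟫)
    (hF_bessel : ∀ f : H,
      ∫⁻ ω, (‖⟪F ω, f⟫‖₊ : ENNReal) ^ 2 ∂μ ≤ ENNReal.ofReal (B_F * ‖f‖ ^ 2))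
    (hG_meas : ∀ f : H, Measurable fun ω => ⟪G ω, f⟫)
    (hG_bessel : ∀ f : H,
      ∫⁻ ω, (‖⟪G ω, f⟫‖₊ : ENNReal) ^ 2 ∂μ ≤ ENNReal.ofReal (B_G * ‖f‖ ^ 2))
    (L : ℝ)
    (hbounded : ∀ᵐ ω ∂μ, ‖F ω‖ ≤ L)
    (m : Ω → ℂ)
    (hm_bdd : ∃ C : ℝ, ∀ᵐ ω ∂μ, ‖m ω‖ ≤ C)
    (K : Set Ω) (hK : MeasurableSet K) (hK_fin : μ K < ⊤)
    (hm_supp : ∀ᵐ ω ∂μ, ω ∉ K → m ω = 0)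
    (M : H →L[ℂ] H)
    (hM : ∀ f g : H, ⟪g, M f⟫ = ∫ ω, m ω * ⟪F ω, f⟫ * ⟪g, G ω⟫ ∂μ) :
    IsCompactOperator M ∧ IsCompactOperator (ContinuousLinearMap.adjoint M) := by
  obtain ⟨C, hC⟩ := hm_bdd
  have hFi := fun f => (aux_bessel μ F B_F hBF hF_meas hF_bessel f).1
  have hGi := aux_bessel μ G B_G hBG hG_meas hG_bessel
  have est : ∀ f, ‖M f‖ ^ 2 ≤ C ^ 2 * B_G * ∫ ω in K, ‖⟪F ω, f⟫‖ ^ 2 ∂μ := by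
    intro f
    have h1 : ‖M f‖ ^ 2 = ‖⟪M f, M f⟫‖ := by
      rw [inner_self_eq_norm_sq_to_K, norm_pow]; simp
    have hi1 : Integrable (fun ω => (C ^ 2 * B_G / 2) *
        K.indicator (fun ω => ‖⟪F ω, f⟫‖ ^ 2) ω) μ := ((hFi f).indicator hK).const_mul _
    have hi2 : Integrable (fun ω => (1 / (2 * B_G)) * ‖⟪G ω, M f⟫‖ ^ 2) μ :=
      (hGi (M f)).1.const_mul _
    have h2 := norm_integral_le_of_norm_le (μ := μ)
      (f := fun ω => m ω * ⟪F ω, f⟫ * ⟪M f, G ω⟫) (hi1.add hi2) (by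
        filter_upwards [hC, hm_supp] with ω hω hs
        by_cases hωK : ω ∈ K
        · simp only [Pi.add_apply, Set.indicator_of_mem hωK]
          rw [norm_mul, norm_mul, norm_inner_symm (M f)]
          set a := ‖⟪F ω, f⟫‖
          set b := ‖⟪G ω, M f⟫‖
          have ha : 0 ≤ a := norm_nonneg _
          have hb : 0 ≤ b := norm_nonneg _
          have h3 : ‖m ω‖ * a * b ≤ C * a * b := by gcongr
          have h4 : C ^ 2 * B_G / 2 * a ^ 2 + 1 / (2 * B_G) * b ^ 2 - C * a * b =
              (C * B_G * a - b) ^ 2 / (2 * B_G) := by field_simp; ring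
          have h5 : 0 ≤ (C * B_G * a - b) ^ 2 / (2 * B_G) := by positivity
          linarith
        · rw [hs hωK]
          simp only [Pi.add_apply, Set.indicator_of_notMem hωK]
          simp only [zero_mul, norm_zero, mul_zero, zero_add]
          positivity)
    rw [← hM f (M f), ← h1] at h2
    have h6 : ∫ ω, ((fun ω : Ω => (C ^ 2 * B_G / 2) *
        K.indicator (fun ω => ‖⟪F ω, f⟫‖ ^ 2) ω) +
        (fun ω => (1 / (2 * B_G)) * ‖⟪G ω, M f⟫‖ ^ 2) : Ω → ℝ) ω ∂μ =
        (C ^ 2 * B_G / 2) * (∫ ω in K, ‖⟪F ω, f⟫‖ ^ 2 ∂μ) +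
        (1 / (2 * B_G)) * ∫ ω, ‖⟪G ω, M f⟫‖ ^ 2 ∂μ := by
      rw [integral_add' hi1 hi2, integral_const_mul, integral_const_mul, integral_indicator hK]
    rw [h6] at h2
    have h7 : (1 / (2 * B_G)) * ∫ ω, ‖⟪G ω, M f⟫‖ ^ 2 ∂μ ≤ (1 / (2 * B_G)) * (B_G * ‖M f‖ ^ 2) :=
      mul_le_mul_of_nonneg_left (hGi (M f)).2 (by positivity)
    have h8 : (1 / (2 * B_G)) * (B_G * ‖M f‖ ^ 2) = ‖M f‖ ^ 2 / 2 := by field_simp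
    linarith
  apply aux_compact
  refine aux_approx M (C ^ 2 * B_G * (L ^ 2 * μ.real K)) ?_
  intro s hs
  calc ∑ e ∈ s, ‖M e‖ ^ 2 ≤ ∑ e ∈ s, C ^ 2 * B_G * ∫ ω in K, ‖⟪F ω, e⟫‖ ^ 2 ∂μ :=
        Finset.sum_le_sum fun e _ => est e
    _ = C ^ 2 * B_G * ∫ ω in K, ∑ e ∈ s, ‖⟪F ω, e⟫‖ ^ 2 ∂μ := by
        rw [integral_finset_sum _ fun e _ => (hFi e).integrableOn, Finset.mul_sum]
    _ ≤ C ^ 2 * B_G * ∫ ω in K, L ^ 2 ∂μ := by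
        refine mul_le_mul_of_nonneg_left ?_ (by positivity)
        refine integral_mono_ae (integrable_finset_sum _ fun e _ => (hFi e).integrableOn)
          (integrableOn_const hK_fin.ne) ?_
        filter_upwards [ae_restrict_of_ae hbounded] with ω hω
        have h1 := hs.sum_inner_products_le (F ω) (s := Finset.univ)
        rw [Finset.sum_coe_sort s (fun e => ‖⟪e, F ω⟫‖ ^ 2)] at h1
        simp_rw [norm_inner_symm (F ω)]
        exact h1.trans (by gcongr)
    _ = C ^ 2 * B_G * (L ^ 2 * μ.real K) := by
        rw [setIntegral_const, smul_eq_mul, mul_comm (L ^ 2)]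

/-- If `F, G` are Bessel mappings, one of which is (essentially) norm bounded, and `m` is an
essentially bounded measurable symbol whose support has finite measure, then the continuous
Bessel multiplier `M_{m,F,G}` is a compact operator.
In Mathlib's convention the paper's `⟨x, y⟩` is `⟪y, x⟫`. -/
theorem multiplier_compact_of_finite_support_symbol
    {Ω : Type} [MeasurableSpace Ω] (μ : Measure Ω)
    {H : Type} [NormedAddCommGroup H] [InnerProductSpace ℂ H] [CompleteSpace H]
    (F G : Ω → H) (B_F B_G : ℝ) (hBF : 0 < B_F) (hBG : 0 < B_G)
    (hF_meas : ∀ f : H, Measurable fun ω => ⟪F ω, f⟫)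
    (hF_bessel : ∀ f : H,
      ∫⁻ ω, (‖⟪F ω, f⟫‖₊ : ENNReal) ^ 2 ∂μ ≤ ENNReal.ofReal (B_F * ‖f‖ ^ 2))
    (hG_meas : ∀ f : H, Measurable fun ω => ⟪G ω, f⟫)
    (hG_bessel : ∀ f : H,
      ∫⁻ ω, (‖⟪G ω, f⟫‖₊ : ENNReal) ^ 2 ∂μ ≤ ENNReal.ofReal (B_G * ‖f‖ ^ 2))
    (L : ℝ) (hL : 0 < L)
    (hbounded : (∀ᵐ ω ∂μ, ‖F ω‖ ≤ L) ∨ (∀ᵐ ω ∂μ, ‖G ω‖ ≤ L))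
    (m : Ω → ℂ) (hm_meas : Measurable m)
    (hm_bdd : ∃ C : ℝ, ∀ᵐ ω ∂μ, ‖m ω‖ ≤ C)
    (K : Set Ω) (hK : MeasurableSet K) (hK_fin : μ K < ⊤)
    (hm_supp : ∀ᵐ ω ∂μ, ω ∉ K → m ω = 0)
    (M : H →L[ℂ] H)
    (hM : ∀ f g : H, ⟪g, M f⟫ = ∫ ω, m ω * ⟪F ω, f⟫ * ⟪g, G ω⟫ ∂μ) :
    IsCompactOperator M := by
  rcases hbounded with hb | hb
  · exact (aux_core μ F G B_F B_G hBF hBG hF_meas hF_bessel hG_meas hG_bessel L hb m hm_bdd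
      K hK hK_fin hm_supp M hM).1
  · have h := (aux_core μ G F B_G B_F hBG hBF hG_meas hG_bessel hF_meas hF_bessel L hb
      (fun ω => (starRingEnd ℂ) (m ω)) (by simpa using hm_bdd)
      K hK hK_fin (by simpa using hm_supp) (ContinuousLinearMap.adjoint M) (by
        intro f g
        rw [ContinuousLinearMap.adjoint_inner_right, ← inner_conj_symm, hM, ← integral_conj]
        congr 1
        ext ω
        simp only [map_mul, inner_conj_symm]
        ring)).2
    rwa [ContinuousLinearMap.adjoint_adjoint] at h
end
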